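/- For every prime p with p ≡ 1 (mod 8), the sum Σ_{n=1}^{⌊p/8⌋} (n/p) is nonnegative. -/

import Mathlib

open Finset Filter Topology


/-- Gaussian binomial coefficients, evaluated at `q`. -/
noncomputable def gB (q : ℂ) : ℕ → ℕ → ℂ
  | _, 0 => 1
  | 0, _ + 1 => 0
  | n + 1, k + 1 => q ^ (k + 1) * gB q n (k + 1) + gB q n k

lemma gB_zero (q : ℂ) (n : ℕ) : gB q n 0 = 1 := by cases n <;> simp [gB]

lemma gB_succ (q : ℂ) (n k : ℕ) :
    gB q (n + 1) (k + 1) = q ^ (k + 1) * gB q n (k + 1) + gB q n k := by simp [gB]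

lemma gB_gt (q : ℂ) (n : ℕ) : ∀ k, n < k → gB q n k = 0 := by
  induction n with
  | zero => intro k hk; cases k with
    | zero => omega
    | succ k => simp [gB]
  | succ n ih => intro k hk; cases k with
    | zero => omega
    | succ k => rw [gB_succ, ih _ (by omega), ih _ (by omega)]; simp

lemma gB_step (q : ℂ) (n : ℕ) : ∀ k, k ≤ n →
    (1 - q ^ (k + 1)) * gB q n (k + 1) = (1 - q ^ (n - k)) * gB q n k := by
  induction n with
  | zero =>
    intro k hk
    obtain rfl : k = 0 := by omega
    simp [gB]
  | succ n ih =>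
    intro k hk
    rcases Nat.lt_or_ge n k with h | h
    · obtain rfl : k = n + 1 := by omega
      rw [gB_gt q (n + 1) (n + 1 + 1) (by omega)]; simp
    · have h1 : (1 - q ^ (k + 1)) * gB q (n + 1) (k + 1) = (1 - q ^ (n + 1)) * gB q n k := by
        have e : q ^ (n + 1) = q ^ (k + 1) * q ^ (n - k) := by
          rw [← pow_add]; congr 1; omega
        rw [gB_succ, e]
        linear_combination q ^ (k + 1) * ih k h
      rw [h1]
      cases k with
      | zero => simp [gB_zero]
      | succ k =>
        have e : q ^ (n + 1) = q ^ (k + 1) * q ^ (n - k) := by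
          rw [← pow_add]; congr 1; omega
        have e2 : n + 1 - (k + 1) = n - k := by omega
        rw [gB_succ, e, e2]
        linear_combination ih k (by omega)

lemma gB_pascal (q : ℂ) (n k : ℕ) (h : k ≤ n) :
    gB q (n + 1) (k + 1) = gB q n (k + 1) + q ^ (n - k) * gB q n k := by
  rw [gB_succ]; linear_combination - gB_step q n k h

lemma gB_absorb (q : ℂ) (n k : ℕ) (h : k ≤ n + 1) :
    (1 - q ^ (n + 1 - k)) * gB q (n + 1) k = (1 - q ^ (n + 1)) * gB q n k := by
  cases k with
  | zero => simp [gB_zero]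
  | succ k =>
    have e : q ^ (n + 1) = q ^ (k + 1) * q ^ (n - k) := by
      rw [← pow_add]; congr 1; omega
    have e2 : n + 1 - (k + 1) = n - k := by omega
    rw [gB_succ, e, e2]
    linear_combination -gB_step q n k (by omega)

lemma gB_alt (q : ℂ) (n : ℕ) :
    ∑ k ∈ range (n + 3), (-1) ^ k * gB q (n + 2) k
      = (1 - q ^ (n + 1)) * ∑ k ∈ range (n + 1), (-1) ^ k * gB q n k := by
  have h1 : ∑ k ∈ range (n + 3), (-1) ^ k * gB q (n + 2) k
      = ∑ k ∈ range (n + 2), (-1) ^ k * gB q (n + 1) k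
        - ∑ k ∈ range (n + 2), (-1) ^ k * (q ^ (n + 1 - k) * gB q (n + 1) k) := by
    have h2 : ∑ k ∈ range (n + 2), (-1) ^ k * gB q (n + 1) k
        = ∑ k ∈ range (n + 3), (-1) ^ k * gB q (n + 1) k := by
      rw [sum_range_succ _ (n + 2), gB_gt q (n + 1) (n + 2) (by omega)]; simp
    rw [h2, sum_range_succ' _ (n + 2), sum_range_succ' _ (n + 2), gB_zero, gB_zero,
      add_sub_right_comm, ← sum_sub_distrib]
    congr 1
    refine sum_congr rfl fun k hk => ?_
    rw [gB_pascal q (n + 1) k (by simp at hk; omega)]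
    ring
  rw [h1, ← sum_sub_distrib, mul_sum]
  have h3 : ∑ k ∈ range (n + 1), (1 - q ^ (n + 1)) * ((-1) ^ k * gB q n k)
        = ∑ k ∈ range (n + 2), (1 - q ^ (n + 1)) * ((-1) ^ k * gB q n k) := by
      rw [sum_range_succ _ (n + 1), gB_gt q n (n + 1) (by omega)]; simp
  rw [h3]
  refine sum_congr rfl fun k hk => ?_
  linear_combination (-1) ^ k * gB_absorb q n k (by simp at hk; omega)

lemma gB_prod (q : ℂ) (M : ℕ) :
    ∑ k ∈ range (2 * M + 1), (-1) ^ k * gB q (2 * M) k = ∏ i ∈ range M, (1 - q ^ (2 * i + 1)) := by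
  induction M with
  | zero => simp [gB]
  | succ M ih =>
    rw [prod_range_succ, ← ih, mul_comm (∑ k ∈ range (2 * M + 1), _)]
    exact gB_alt q (2 * M)

lemma gB_root (z q : ℂ) (hz : z ^ 2 * q = 1) (p : ℕ) (hq : q ^ p = 1)
    (hne : ∀ k, 0 < k → k < p → q ^ k ≠ 1) (k : ℕ) (hk : k < p) :
    (-1) ^ k * gB q (p - 1) k = z ^ (k * (k + 1)) := by
  induction k with
  | zero => simp [gB_zero]
  | succ k ih =>
    have ih := ih (by omega)
    have h1 := gB_step q (p - 1) k (by omega)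
    have h2 : q ^ (k + 1) * q ^ (p - 1 - k) = 1 := by
      rw [← pow_add, ← hq]; congr 1; omega
    have h3 : q ^ (k + 1) * gB q (p - 1) (k + 1) = - gB q (p - 1) k := by
      have := hne (k + 1) (by omega) hk
      apply mul_left_cancel₀ (sub_ne_zero.2 this.symm)
      linear_combination q ^ (k + 1) * h1 - gB q (p - 1) k * h2
    have h4 : z ^ (2 * (k + 1)) * q ^ (k + 1) = 1 := by
      rw [pow_mul, ← mul_pow, hz, one_pow]
    have e : z ^ ((k + 1) * (k + 1 + 1)) = z ^ (k * (k + 1)) * z ^ (2 * (k + 1)) := by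
      rw [← pow_add]; congr 1; ring
    rw [e, ← ih]
    linear_combination (-1) ^ (k + 1) * z ^ (2 * (k + 1)) * h3
      - (-1) ^ (k + 1) * gB q (p - 1) (k + 1) * h4 

/-- the product formula -/
lemma gauss_pos (p m : ℕ) (hm : p = 4 * m + 1) (hm0 : 0 < m) (hp : p.Prime) (z : ℂ)
    (hz : z = Complex.exp (2 * Real.pi * Complex.I / p)) :
    ∃ r : ℝ, 0 < r ∧ z ^ ((2 * m) ^ 2) * ∑ k ∈ range p, z ^ (k * (k + 1)) = r := by
  have hprim : IsPrimitiveRoot z p := by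
    rw [hz]; exact Complex.isPrimitiveRoot_exp p hp.ne_zero
  have hz0 : z ≠ 0 := by rw [hz]; exact Complex.exp_ne_zero _
  set q := (z ^ 2)⁻¹ with hq
  have hzq : z ^ 2 * q = 1 := mul_inv_cancel₀ (pow_ne_zero _ hz0)
  have hqprim : IsPrimitiveRoot q p := by
    apply IsPrimitiveRoot.inv
    apply hprim.pow_of_coprime
    rw [Nat.coprime_comm, Nat.coprime_primes hp Nat.prime_two |>.symm.symm]
    omega
  have h1 : ∑ k ∈ range p, z ^ (k * (k + 1)) = ∏ i ∈ range (2 * m), (1 - q ^ (2 * i + 1)) := by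
    rw [← gB_prod]
    have e : 2 * (2 * m) + 1 = p := by omega
    have e' : 2 * (2 * m) = p - 1 := by omega
    rw [e, e']
    refine sum_congr rfl fun k hk => ?_
    rw [gB_root z q hzq p hqprim.pow_eq_one _ k (mem_range.1 hk)]
    intro k h0 hk
    exact hqprim.pow_ne_one_of_pos_of_lt h0.ne' hk
  have hsin : ∀ j : ℕ, z ^ j * (1 - q ^ j) = 2 * Complex.I * Real.sin (2 * Real.pi * j / p) := by
    intro j
    have e1 : z ^ j = Complex.exp (((2 * Real.pi * j / p : ℝ) : ℂ) * Complex.I) := by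
      rw [hz, ← Complex.exp_nat_mul]; congr 1; push_cast; ring
    have e2 : z ^ j * q ^ j = Complex.exp (-((2 * Real.pi * j / p : ℝ) : ℂ) * Complex.I) := by
      rw [neg_mul, Complex.exp_neg, ← e1, hq, inv_pow, ← pow_mul]
      field_simp
      ring
    rw [mul_sub, e2, e1, mul_one, Complex.ofReal_sin, Complex.sin]
    linear_combination (Complex.exp (((2 * Real.pi * j / p : ℝ) : ℂ) * Complex.I)
      - Complex.exp (-((2 * Real.pi * j / p : ℝ) : ℂ) * Complex.I)) * Complex.I_sq
  have hodd : ∀ M : ℕ, z ^ (M ^ 2) = ∏ i ∈ range M, z ^ (2 * i + 1) := by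
    intro M
    induction M with
    | zero => simp
    | succ M ih => rw [prod_range_succ, ← ih, ← pow_add]; congr 1; ring
  have h2 : z ^ ((2 * m) ^ 2) * ∑ k ∈ range p, z ^ (k * (k + 1))
      = ∏ i ∈ range (m + m), (2 * Complex.I * Real.sin (2 * Real.pi * (2 * i + 1 : ℕ) / p)) := by
    rw [h1, hodd, ← prod_mul_distrib, two_mul]
    exact prod_congr rfl fun i _ => hsin _
  have hpp : (0 : ℝ) < p := by exact_mod_cast hp.pos
  have hpm : (p : ℝ) = 4 * m + 1 := by rw [hm]; push_cast; ring
  refine ⟨∏ i ∈ range m, (-4 * (Real.sin (2 * Real.pi * (2 * i + 1 : ℕ) / p)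
    * Real.sin (2 * Real.pi * (2 * (m + i) + 1 : ℕ) / p))), ?_, ?_⟩
  · apply prod_pos
    intro i hi
    have hi' : (i : ℝ) + 1 ≤ m := by exact_mod_cast mem_range.1 hi
    have hi0 : (0 : ℝ) ≤ i := by positivity
    have a1 : 0 < Real.sin (2 * Real.pi * (2 * i + 1 : ℕ) / p) := by
      apply Real.sin_pos_of_pos_of_lt_pi
      · positivity
      · rw [div_lt_iff₀ hpp]; push_cast; rw [hpm]; nlinarith [Real.pi_pos]
    have a2 : Real.sin (2 * Real.pi * (2 * (m + i) + 1 : ℕ) / p) < 0 := by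
      rw [← Real.sin_sub_two_pi]
      apply Real.sin_neg_of_neg_of_neg_pi_lt
      · rw [sub_neg, div_lt_iff₀ hpp]; push_cast; rw [hpm]; nlinarith [Real.pi_pos]
      · rw [lt_sub_iff_add_lt, lt_div_iff₀ hpp]; push_cast; rw [hpm]; nlinarith [Real.pi_pos]
    nlinarith [mul_pos a1 (neg_pos.2 a2)]
  · rw [h2, prod_range_add, ← prod_mul_distrib]
    push_cast
    refine prod_congr rfl fun i _ => ?_
    linear_combination (4 * Complex.sin (2 * Real.pi * (2 * i + 1) / p)
      * Complex.sin (2 * Real.pi * (2 * (m + i) + 1) / p)) * Complex.I_sq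


lemma divsum_nonneg (f : ℕ → ℤ) (h0 : f 0 = 0) (h1 : f 1 = 1) (hm : ∀ a b, f (a * b) = f a * f b)
    (hv : ∀ n, f n = 0 ∨ f n = 1 ∨ f n = -1) (n : ℕ) : 0 ≤ ∑ d ∈ n.divisors, f d := by
  rcases eq_or_ne n 0 with rfl | hn
  · simp
  let g : ArithmeticFunction ℤ := ⟨f, h0⟩
  have hg : g.IsMultiplicative := ⟨h1, fun {a b} _ => hm a b⟩
  have hz : ((ArithmeticFunction.zeta : ArithmeticFunction ℤ) * g).IsMultiplicative :=
    ArithmeticFunction.isMultiplicative_zeta.natCast.mul hg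
  have e : ∀ n, ((ArithmeticFunction.zeta : ArithmeticFunction ℤ) * g) n
      = ∑ d ∈ n.divisors, f d := fun n => ArithmeticFunction.coe_zeta_mul_apply
  have hpow : ∀ a k, f (a ^ k) = f a ^ k := by
    intro a k
    induction k with
    | zero => simp [h1]
    | succ k ih => rw [pow_succ, hm, ih, pow_succ]
  rw [← e, hz.multiplicative_factorization _ hn]
  refine Finset.prod_nonneg fun q hq => ?_
  simp only [e]
  rw [Nat.sum_divisors_prime_pow (Nat.prime_of_mem_primeFactors hq)]
  simp only [hpow]
  rcases hv q with h | h | h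
  · exact Finset.sum_nonneg fun i _ => by simp [h]
  · exact Finset.sum_nonneg fun i _ => by simp [h]
  · rw [h, neg_one_geom_sum]; split_ifs <;> simp

lemma lam_summable (c : ℕ → ℝ) (C : ℝ) (hc : ∀ n, |c n| ≤ C) (q : ℝ) (hq0 : 0 < q) (hq : q < 1) :
    Summable fun x : ℕ+ × ℕ+ => c x.2 * q ^ (x.1 * x.2 : ℕ) := by
  have h := (summable_prod_mul_pow (𝕜 := ℝ) 0 (r := q)
    (by rw [Real.norm_eq_abs, abs_of_pos hq0]; exact hq)).mul_left C
  refine Summable.of_norm_bounded h fun x => ?_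
  rw [norm_mul, Real.norm_eq_abs, Real.norm_eq_abs, abs_of_pos (pow_pos hq0 _), pow_zero, one_mul]
  exact mul_le_mul_of_nonneg_right (hc _) (by positivity)

lemma lam_nonneg (c : ℕ → ℝ) (C : ℝ) (hc : ∀ n, |c n| ≤ C) (q : ℝ) (hq0 : 0 < q) (hq : q < 1)
    (hd : ∀ n : ℕ, 0 ≤ ∑ d ∈ n.divisors, c d) :
    0 ≤ ∑' x : ℕ+ × ℕ+, c x.2 * q ^ (x.1 * x.2 : ℕ) := by
  have hs := lam_summable c C hc q hq0 hq
  rw [← sigmaAntidiagonalEquivProd.tsum_eq]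
  have hs' := sigmaAntidiagonalEquivProd.summable_iff.2 hs
  simp only [Function.comp_def] at hs'
  rw [Summable.tsum_sigma hs']
  refine tsum_nonneg fun n => ?_
  have : ∑' (y : {x // x ∈ (n : ℕ).divisorsAntidiagonal}),
      c ((sigmaAntidiagonalEquivProd ⟨n, y⟩).2 : ℕ) * q ^ (((sigmaAntidiagonalEquivProd ⟨n, y⟩).1 : ℕ)
        * ((sigmaAntidiagonalEquivProd ⟨n, y⟩).2 : ℕ))
      = (∑ d ∈ (n : ℕ).divisors, c d) * q ^ (n : ℕ) := by
    simp only [sigmaAntidiagonalEquivProd, divisorsAntidiagonalFactors, PNat.mk_coe,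
      Equiv.coe_fn_mk, tsum_fintype, univ_eq_attach]
    rw [(n : ℕ).divisorsAntidiagonal.sum_attach (fun x : ℕ × ℕ => c x.2 * q ^ (x.1 * x.2)),
      Nat.sum_divisorsAntidiagonal' (fun x y => c y * q ^ (x * y)), sum_mul]
    exact sum_congr rfl fun i hi => by rw [Nat.div_mul_cancel (Nat.dvd_of_mem_divisors hi)]
  rw [this]
  exact mul_nonneg (hd _) (by positivity)

lemma sin_eighth (d : ℕ) : Real.sin (2 * Real.pi * (1 / 8) * d)
    = Real.sqrt 2 / 2 * (ZMod.χ₈' (d : ZMod 8) : ℤ)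
      + if 2 ∣ d then ((ZMod.χ₄ ((d / 2 : ℕ) : ZMod 4) : ℤ) : ℝ) else 0 := by
  obtain ⟨j, r, hr, rfl⟩ : ∃ j r, r < 8 ∧ d = r + 8 * j :=
    ⟨d / 8, d % 8, Nat.mod_lt _ (by norm_num), by omega⟩
  have e : 2 * Real.pi * (1 / 8) * ((r + 8 * j : ℕ) : ℝ) = r * Real.pi / 4 + j * (2 * Real.pi) := by
    push_cast; ring
  have e2 : (((r + 8 * j : ℕ)) : ZMod 8) = (r : ZMod 8) := by
    push_cast
    have : (8 : ZMod 8) = 0 := by decide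
    rw [this]; ring
  have e3 : (((r + 8 * j) / 2 : ℕ) : ZMod 4) = ((r / 2 : ℕ) : ZMod 4) := by
    have : (r + 8 * j) / 2 = r / 2 + 4 * j := by omega
    rw [this]
    push_cast
    have : (4 : ZMod 4) = 0 := by decide
    rw [this]; ring
  have e4 : 2 ∣ r + 8 * j ↔ 2 ∣ r := by omega
  rw [e, Real.sin_add_nat_mul_two_pi, e2, e3]
  simp only [e4]
  have hpi := Real.sin_pi_div_four
  have s3 : Real.sin (3 * Real.pi / 4) = √2 / 2 := by
    rw [← hpi, ← Real.sin_pi_sub]; congr 1; ring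
  have s5 : Real.sin (5 * Real.pi / 4) = -(√2 / 2) := by
    rw [← hpi, ← Real.sin_add_pi]; congr 1; ring
  have s7 : Real.sin (7 * Real.pi / 4) = -(√2 / 2) := by
    rw [← s3, ← Real.sin_add_pi]; congr 1; ring
  have s2 : Real.sin (2 * Real.pi / 4) = 1 := by
    rw [← Real.sin_pi_div_two]; congr 1; ring
  have s4 : Real.sin (4 * Real.pi / 4) = 0 := by
    rw [← Real.sin_pi]; congr 1; ring
  have s6 : Real.sin (6 * Real.pi / 4) = -1 := by
    rw [← Real.sin_pi_div_two, ← Real.sin_add_pi]; congr 1; ring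
  interval_cases r
  · have a : ZMod.χ₈' ((0 : ℕ) : ZMod 8) = 0 := by decide
    have b : ZMod.χ₄ ((0 / 2 : ℕ) : ZMod 4) = 0 := by decide
    rw [a, b]; simp
  · have a : ZMod.χ₈' ((1 : ℕ) : ZMod 8) = 1 := by decide
    rw [a]; simp [hpi]
  · have a : ZMod.χ₈' ((2 : ℕ) : ZMod 8) = 0 := by decide
    have b : ZMod.χ₄ ((2 / 2 : ℕ) : ZMod 4) = 1 := by decide
    rw [a, b]; simp [s2]
  · have a : ZMod.χ₈' ((3 : ℕ) : ZMod 8) = 1 := by decide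
    rw [a]; simp [s3]
  · have a : ZMod.χ₈' ((4 : ℕ) : ZMod 8) = 0 := by decide
    have b : ZMod.χ₄ ((4 / 2 : ℕ) : ZMod 4) = 0 := by decide
    rw [a, b]; norm_num [s4]
  · have a : ZMod.χ₈' ((5 : ℕ) : ZMod 8) = -1 := by decide
    rw [a]; simp [s5]
  · have a : ZMod.χ₈' ((6 : ℕ) : ZMod 8) = 0 := by decide
    have b : ZMod.χ₄ ((6 / 2 : ℕ) : ZMod 4) = -1 := by decide
    rw [a, b]; norm_num [s6]
  · have a : ZMod.χ₈' ((7 : ℕ) : ZMod 8) = -1 := by decide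
    rw [a]; simp [s7]

lemma divsum_sin (p : ℕ) [Fact p.Prime] (hp : p % 8 = 1) (n : ℕ) :
    0 ≤ ∑ d ∈ n.divisors, (quadraticChar (ZMod p) (d : ZMod p) : ℝ)
      * Real.sin (2 * Real.pi * (1 / 8) * d) := by
  have hq : ∀ a : ZMod p, quadraticChar (ZMod p) a = 0 ∨ quadraticChar (ZMod p) a = 1 ∨
      quadraticChar (ZMod p) a = -1 := fun a => quadraticChar_isQuadratic (ZMod p) a
  have h2 : quadraticChar (ZMod p) (2 : ZMod p) = 1 := by
    have := legendreSym.at_two (p := p) (by rintro rfl; omega)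
    rw [ZMod.χ₈_nat_eq_if_mod_eight] at this
    simpa [legendreSym, hp, show p % 2 = 1 by omega] using this
  have A : ∀ n : ℕ, 0 ≤ ∑ d ∈ n.divisors, (quadraticChar (ZMod p) (d : ZMod p)
      * ZMod.χ₈' (d : ZMod 8)) := by
    apply divsum_nonneg
    · simp
    · simp
    · intro a b; push_cast; rw [map_mul, map_mul]; ring
    · intro a
      rcases hq a with h | h | h <;> rcases ZMod.isQuadratic_χ₈' (a : ZMod 8) with h' | h' | h' <;>
        rw [h, h'] <;> simp
  have B : ∀ n : ℕ, 0 ≤ ∑ d ∈ n.divisors, (quadraticChar (ZMod p) (d : ZMod p)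
      * ZMod.χ₄ (d : ZMod 4)) := by
    apply divsum_nonneg
    · simp
    · simp
    · intro a b; push_cast; rw [map_mul, map_mul]; ring
    · intro a
      rcases hq a with h | h | h <;> rcases ZMod.isQuadratic_χ₄ (a : ZMod 4) with h' | h' | h' <;>
        rw [h, h'] <;> simp
  have C : 0 ≤ ∑ d ∈ n.divisors, (if 2 ∣ d then quadraticChar (ZMod p) (d : ZMod p)
      * ZMod.χ₄ ((d / 2 : ℕ) : ZMod 4) else 0) := by
    rw [← sum_filter]
    by_cases hn : 2 ∣ n
    · obtain ⟨k, rfl⟩ := hn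
      rcases Nat.eq_zero_or_pos k with rfl | hk
      · simp
      have : (2 * k).divisors.filter (2 ∣ ·) = k.divisors.image (2 * ·) := by
        ext d
        simp only [mem_filter, Nat.mem_divisors, mem_image]
        constructor
        · rintro ⟨⟨h1, _⟩, e, rfl⟩
          exact ⟨e, ⟨(Nat.mul_dvd_mul_iff_left (by norm_num)).1 h1, hk.ne'⟩, rfl⟩
        · rintro ⟨e, ⟨h1, _⟩, rfl⟩
          exact ⟨⟨Nat.mul_dvd_mul_left 2 h1, by omega⟩, Dvd.intro _ rfl⟩
      rw [this, sum_image (fun a _ b _ h => by simpa using h)]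
      convert B k using 3 with d
      · push_cast; rw [map_mul, h2, one_mul]
      · simp
    · apply sum_nonneg
      intro d hd
      simp only [mem_filter, Nat.mem_divisors] at hd
      exact absurd (hd.2.trans hd.1.1) hn
  have A' : (0 : ℝ) ≤ ((∑ d ∈ n.divisors, (quadraticChar (ZMod p) (d : ZMod p)
      * ZMod.χ₈' (d : ZMod 8)) : ℤ) : ℝ) := by exact_mod_cast A n
  have C' : (0 : ℝ) ≤ ((∑ d ∈ n.divisors, (if 2 ∣ d then quadraticChar (ZMod p) (d : ZMod p)
      * ZMod.χ₄ ((d / 2 : ℕ) : ZMod 4) else 0) : ℤ) : ℝ) := by exact_mod_cast C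
  have : ∑ d ∈ n.divisors, (quadraticChar (ZMod p) (d : ZMod p) : ℝ)
      * Real.sin (2 * Real.pi * (1 / 8) * d) =
      √2 / 2 * ((∑ d ∈ n.divisors, (quadraticChar (ZMod p) (d : ZMod p)
      * ZMod.χ₈' (d : ZMod 8)) : ℤ) : ℝ) +
      ((∑ d ∈ n.divisors, (if 2 ∣ d then quadraticChar (ZMod p) (d : ZMod p)
      * ZMod.χ₄ ((d / 2 : ℕ) : ZMod 4) else 0) : ℤ) : ℝ) := by
    rw [Int.cast_sum, Int.cast_sum, mul_sum, ← sum_add_distrib]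
    refine sum_congr rfl fun d _ => ?_
    rw [sin_eighth]
    split_ifs <;> push_cast <;> ring
  rw [this]
  positivity

lemma geom_sin (θ r : ℝ) (hr0 : 0 < r) (hr : r < 1) :
    HasSum (fun k : ℕ => Real.sin (θ * k) * r ^ k)
      (r * Real.sin θ / (1 - 2 * r * Real.cos θ + r ^ 2)) := by
  set z : ℂ := r * Complex.exp (θ * Complex.I) with hz
  have hn : ‖z‖ < 1 := by
    rw [hz, norm_mul, Complex.norm_exp_ofReal_mul_I, Complex.norm_real, Real.norm_eq_abs,
      abs_of_pos hr0]; simpa using hr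
  have h := Complex.hasSum_im (hasSum_geometric_of_norm_lt_one hn)
  have hre : z.re = r * Real.cos θ := by
    rw [hz, Complex.re_ofReal_mul, Complex.exp_ofReal_mul_I_re]
  have him : z.im = r * Real.sin θ := by
    rw [hz, Complex.im_ofReal_mul, Complex.exp_ofReal_mul_I_im]
  convert h using 1
  · ext k
    have : z ^ k = ((r ^ k : ℝ) : ℂ) * Complex.exp (((θ * k : ℝ) : ℂ) * Complex.I) := by
      rw [hz, mul_pow, ← Complex.exp_nat_mul]
      push_cast; congr 2; ring
    rw [this, Complex.im_ofReal_mul, Complex.exp_ofReal_mul_I_im, mul_comm]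
  · rw [Complex.inv_im, Complex.normSq_apply]
    simp only [Complex.sub_re, Complex.sub_im, Complex.one_re, Complex.one_im, hre, him]
    congr 1
    · ring
    · nlinarith [Real.sin_sq_add_cos_sq θ]

/-- the kernel -/
noncomputable def hK (θ s : ℝ) : ℝ :=
  Real.exp (-s) * Real.sin θ / (1 - 2 * Real.exp (-s) * Real.cos θ + Real.exp (-s) ^ 2)

lemma lam_sin (θ t : ℝ) (ht : 0 < t) :
    HasSum (fun m : ℕ => hK θ (t * (m + 1)))
      (∑' x : ℕ+ × ℕ+, Real.sin (θ * (x.2 : ℕ)) * Real.exp (-t) ^ (x.1 * x.2 : ℕ)) := by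
  have hq : Real.exp (-t) < 1 := Real.exp_lt_one_iff.2 (by linarith)
  have hs := lam_summable (fun n => Real.sin (θ * n)) 1 (fun n => Real.abs_sin_le_one _)
    (Real.exp (-t)) (Real.exp_pos _) hq
  have key : ∀ m : ℕ+, HasSum (fun k : ℕ+ => Real.sin (θ * (k : ℕ))
      * Real.exp (-t) ^ ((m : ℕ) * (k : ℕ))) (hK θ (t * (m : ℕ))) := by
    intro m
    have e : Real.exp (-(t * (m : ℕ))) = Real.exp (-t) ^ (m : ℕ) := by
      rw [← Real.exp_nat_mul]; congr 1; ring
    have h := geom_sin θ (Real.exp (-(t * (m : ℕ)))) (Real.exp_pos _) (by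
      apply Real.exp_lt_one_iff.2
      have : (0 : ℝ) < (m : ℕ) := by exact_mod_cast m.pos
      have := mul_pos ht this
      linarith)
    rw [← PNat.coe_injective.hasSum_iff] at h
    · have e2 : ((fun k : ℕ => Real.sin (θ * k) * Real.exp (-(t * (m : ℕ))) ^ k) ∘ PNat.val) =
          fun k : ℕ+ => Real.sin (θ * (k : ℕ)) * Real.exp (-t) ^ ((m : ℕ) * (k : ℕ)) := by
        funext k
        simp only [Function.comp]
        rw [e, ← pow_mul]
      rw [e2] at h
      exact h
    · intro k hk
      have : k = 0 := by
        by_contra h0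
        exact hk ⟨⟨k, Nat.pos_of_ne_zero h0⟩, rfl⟩
      simp [this]
  have h1 := hs.hasSum.prod_fiberwise key
  rw [← Equiv.pnatEquivNat.symm.hasSum_iff] at h1
  convert h1 using 2 with m
  simp

lemma hK_eq (θ s : ℝ) : hK θ s = Real.sin θ / (2 * (Real.cosh s - Real.cos θ)) := by
  rw [hK, Real.cosh_eq]
  have h : Real.exp (-s) * Real.exp s = 1 := by rw [← Real.exp_add]; simp
  have : 1 - 2 * Real.exp (-s) * Real.cos θ + Real.exp (-s) ^ 2
    = Real.exp (-s) * (2 * ((Real.exp s + Real.exp (-s)) / 2 - Real.cos θ)) := by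
    linear_combination -h
  rw [this, mul_div_mul_left _ _ (Real.exp_ne_zero _)]

lemma hK_deriv (θ : ℝ) (h0 : 0 < θ) (h1 : θ < Real.pi) (s : ℝ) :
    HasDerivAt (fun s => Real.arctan ((Real.exp s - Real.cos θ) / Real.sin θ)) (hK θ s) s := by
  have hs : 0 < Real.sin θ := Real.sin_pos_of_pos_of_lt_pi h0 h1
  have := (((Real.hasDerivAt_exp s).sub_const (Real.cos θ)).div_const (Real.sin θ)).arctan
  convert this using 1
  rw [hK, Real.exp_neg]
  have hE := Real.exp_pos s
  have hsc := Real.sin_sq_add_cos_sq θ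
  have p1 : 0 < 1 + ((Real.exp s - Real.cos θ) / Real.sin θ) ^ 2 := by positivity
  have p2 : Real.sin θ ^ 2 + (Real.exp s - Real.cos θ) ^ 2 ≠ 0 := by positivity
  have e1 : 1 - 2 * (Real.exp s)⁻¹ * Real.cos θ + (Real.exp s)⁻¹ ^ 2
      = (Real.sin θ ^ 2 + (Real.exp s - Real.cos θ) ^ 2) / Real.exp s ^ 2 := by
    field_simp
    linear_combination - hsc
  have e2 : 1 + ((Real.exp s - Real.cos θ) / Real.sin θ) ^ 2
      = (Real.sin θ ^ 2 + (Real.exp s - Real.cos θ) ^ 2) / Real.sin θ ^ 2 := by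
    field_simp
  rw [e1, e2]
  field_simp

lemma hK_anti (θ : ℝ) (h0 : 0 < θ) (h1 : θ < Real.pi) (s s' : ℝ) (hs : 0 ≤ s) (hss : s ≤ s') :
    hK θ s' ≤ hK θ s := by
  rw [hK_eq, hK_eq]
  have hsin : 0 < Real.sin θ := Real.sin_pos_of_pos_of_lt_pi h0 h1
  have hc : Real.cos θ < 1 := by
    rw [← Real.cos_zero]; exact Real.cos_lt_cos_of_nonneg_of_le_pi le_rfl h1.le h0
  have h2 : Real.cosh s ≤ Real.cosh s' := by
    rw [Real.cosh_le_cosh, abs_of_nonneg hs, abs_of_nonneg (hs.trans hss)]; exact hss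
  have h3 := Real.one_le_cosh s
  apply div_le_div_of_nonneg_left hsin.le <;> linarith

lemma lam_bounds (θ : ℝ) (h0 : 0 < θ) (h1 : θ < Real.pi) (t L : ℝ) (ht : 0 < t)
    (hL : HasSum (fun m : ℕ => hK θ (t * (m + 1))) L) :
    t * L ≤ (Real.pi - θ) / 2 ∧ (Real.pi - θ) / 2 ≤ t * L + t * hK θ 0 := by
  set H : ℝ → ℝ := fun s => Real.arctan ((Real.exp s - Real.cos θ) / Real.sin θ) with hH
  have hsin : 0 < Real.sin θ := Real.sin_pos_of_pos_of_lt_pi h0 h1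
  have H0 : H 0 = θ / 2 := by
    have e : (Real.exp 0 - Real.cos θ) / Real.sin θ = Real.tan (θ / 2) := by
      have e1 : θ = 2 * (θ / 2) := by ring
      have hs2 : 0 < Real.sin (θ / 2) := Real.sin_pos_of_pos_of_lt_pi (by linarith) (by linarith)
      have hc2 : 0 < Real.cos (θ / 2) :=
        Real.cos_pos_of_mem_Ioo ⟨by linarith [Real.pi_pos], by linarith⟩
      rw [Real.tan_eq_sin_div_cos]
      conv_lhs => rw [e1, Real.sin_two_mul, Real.cos_two_mul]
      rw [div_eq_div_iff (by positivity) hc2.ne', Real.exp_zero]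
      linear_combination (-2 * Real.cos (θ / 2)) * Real.sin_sq_add_cos_sq (θ / 2)
    simp only [hH]
    rw [e, Real.arctan_tan] <;> linarith [Real.pi_pos]
  have Hlim : Tendsto (fun n : ℕ => H (t * n)) atTop (𝓝 (Real.pi / 2)) := by
    have : Tendsto Real.arctan atTop (𝓝 (Real.pi / 2)) :=
      Real.tendsto_arctan_atTop.mono_right nhdsWithin_le_nhds
    refine this.comp ?_
    apply Tendsto.atTop_div_const hsin
    apply tendsto_atTop_add_const_right
    exact Real.tendsto_exp_atTop.comp (tendsto_natCast_atTop_atTop.const_mul_atTop ht)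
  have mvt : ∀ m : ℕ, t * hK θ (t * (m + 1)) ≤ H (t * (m + 1)) - H (t * m) ∧
      H (t * (m + 1)) - H (t * m) ≤ t * hK θ (t * m) := by
    intro m
    have hlt : t * (m : ℝ) < t * (m + 1) := by nlinarith
    obtain ⟨c, hc, hc'⟩ := exists_hasDerivAt_eq_slope H (hK θ) hlt
      (fun y _ => (hK_deriv θ h0 h1 y).continuousAt.continuousWithinAt)
      (fun y _ => hK_deriv θ h0 h1 y)
    have e : H (t * (m + 1)) - H (t * m) = t * hK θ c := by
      rw [hc']; field_simp; ring
    have hm : 0 ≤ t * (m : ℝ) := by positivity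
    rw [e]
    exact ⟨mul_le_mul_of_nonneg_left (hK_anti θ h0 h1 _ _ (hm.trans hc.1.le) hc.2.le) ht.le,
      mul_le_mul_of_nonneg_left (hK_anti θ h0 h1 _ _ hm hc.1.le) ht.le⟩
  have tel : ∀ n : ℕ, ∑ m ∈ range n, (H (t * (m + 1)) - H (t * m)) = H (t * n) - θ / 2 := by
    intro n
    have := Finset.sum_range_sub (fun m : ℕ => H (t * m)) n
    simp only [Nat.cast_add, Nat.cast_one, Nat.cast_zero, mul_zero, H0] at this
    exact this
  have lim1 : Tendsto (fun n : ℕ => t * ∑ m ∈ range n, hK θ (t * (m + 1))) atTop (𝓝 (t * L)) :=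
    hL.tendsto_sum_nat.const_mul t
  have lim2 : Tendsto (fun n : ℕ => H (t * n) - θ / 2) atTop (𝓝 ((Real.pi - θ) / 2)) := by
    convert Hlim.sub_const (θ / 2) using 2; ring
  constructor
  · refine le_of_tendsto_of_tendsto' lim1 lim2 fun n => ?_
    rw [← tel, mul_sum]
    exact sum_le_sum fun m _ => (mvt m).1
  · refine le_of_tendsto_of_tendsto' lim2 (lim1.add_const (t * hK θ 0)) fun n => ?_
    rw [← tel]
    calc _ ≤ ∑ m ∈ range n, t * hK θ (t * m) := sum_le_sum fun m _ => (mvt m).2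
      _ ≤ ∑ m ∈ range (n + 1), t * hK θ (t * m) := by
        apply sum_le_sum_of_subset_of_nonneg (range_mono (Nat.le_succ n))
        intro m _ _
        rw [hK_eq]
        have h3 := Real.one_le_cosh (t * m)
        have h4 := Real.cos_le_one θ
        have : 0 ≤ Real.cosh (t * m) - Real.cos θ := by linarith
        positivity
      _ = _ := by
        rw [sum_range_succ', mul_sum]; simp

noncomputable def Lam (x t : ℝ) : ℝ :=
  ∑' y : ℕ+ × ℕ+, Real.sin (2 * Real.pi * x * (y.2 : ℕ)) * Real.exp (-t) ^ (y.1 * y.2 : ℕ)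

lemma Lam_tendsto_aux (x : ℝ) (h0 : 0 < x) (h1 : x < 1 / 2) :
    Tendsto (fun t => t * Lam x t) (𝓝[>] 0) (𝓝 (Real.pi * (1 / 2 - x))) := by
  have hpi := Real.pi_pos
  have hb : ∀ t : ℝ, 0 < t → _ := fun t ht => lam_bounds (2 * Real.pi * x) (by positivity)
    (by nlinarith) t _ ht (lam_sin (2 * Real.pi * x) t ht)
  have e : (Real.pi - 2 * Real.pi * x) / 2 = Real.pi * (1 / 2 - x) := by ring
  have l0 : Tendsto (fun t : ℝ => Real.pi * (1 / 2 - x) - t * hK (2 * Real.pi * x) 0) (𝓝[>] 0)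
      (𝓝 (Real.pi * (1 / 2 - x))) := by
    have : Tendsto (fun t : ℝ => Real.pi * (1 / 2 - x) - t * hK (2 * Real.pi * x) 0) (𝓝 0)
      (𝓝 (Real.pi * (1 / 2 - x) - 0 * hK (2 * Real.pi * x) 0)) := by
      apply Continuous.tendsto; fun_prop
    rw [zero_mul, sub_zero] at this
    exact this.mono_left nhdsWithin_le_nhds
  refine tendsto_of_tendsto_of_tendsto_of_le_of_le' l0 tendsto_const_nhds ?_ ?_
  · filter_upwards [self_mem_nhdsWithin] with t ht
    have := (hb t ht).2
    rw [e] at this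
    simp only [Lam]; linarith
  · filter_upwards [self_mem_nhdsWithin] with t ht
    have := (hb t ht).1
    rw [e] at this
    simp only [Lam]; linarith

lemma Lam_neg (x t : ℝ) : Lam (-x) t = - Lam x t := by
  rw [Lam, Lam, ← tsum_neg]
  refine tsum_congr fun y => ?_
  rw [show 2 * Real.pi * (-x) * ((y.2 : ℕ) : ℝ) = -(2 * Real.pi * x * ((y.2 : ℕ) : ℝ)) by ring,
    Real.sin_neg]; ring

lemma Lam_add_one (x t : ℝ) : Lam (x + 1) t = Lam x t := by
  rw [Lam, Lam]
  refine tsum_congr fun y => ?_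
  rw [show 2 * Real.pi * (x + 1) * ((y.2 : ℕ) : ℝ)
    = (2 * Real.pi * x * ((y.2 : ℕ) : ℝ)) + (y.2 : ℕ) * (2 * Real.pi) by ring,
    Real.sin_add_nat_mul_two_pi]

lemma Lam_tendsto (x : ℝ) (h0 : 0 < x) (h1 : x < 1) :
    Tendsto (fun t => t * Lam x t) (𝓝[>] 0) (𝓝 (Real.pi * (1 / 2 - x))) := by
  rcases lt_trichotomy x (1 / 2) with h | h | h
  · exact Lam_tendsto_aux x h0 h
  · have : ∀ t, Lam x t = 0 := by
      intro t
      have h1 := Lam_neg x t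
      have h2 := Lam_add_one (-x) t
      have : -x + 1 = x := by rw [h]; norm_num
      rw [this] at h2
      linarith
    simp only [this]; rw [h]; simp
  · have h3 := (Lam_tendsto_aux (1 - x) (by linarith) (by linarith)).neg
    convert h3 using 2 with t
    · rw [show 1 - x = -x + 1 by ring, Lam_add_one, Lam_neg]; ring
    · ring

lemma sum_zmod_range {A : Type*} [AddCommMonoid A] (p : ℕ) [NeZero p] (f : ZMod p → A) :
    ∑ a : ZMod p, f a = ∑ a ∈ range p, f (a : ZMod p) := by
  refine sum_nbij' (fun a => a.val) (fun n => (n : ZMod p)) ?_ ?_ ?_ ?_ ?_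
  · intro a _; exact mem_range.2 (ZMod.val_lt a)
  · intro a _; exact mem_univ _
  · intro a _; simp
  · intro a ha; exact ZMod.val_cast_of_lt (mem_range.1 ha)
  · intro a _; simp

lemma std_pow (p : ℕ) [NeZero p] (n : ℕ) :
    ZMod.stdAddChar (n : ZMod p) = Complex.exp (2 * Real.pi * Complex.I / p) ^ n := by
  have := ZMod.stdAddChar_coe (N := p) (n : ℤ)
  rw [← Complex.exp_nat_mul]
  push_cast at this
  rw [this]; congr 1; ring

lemma char_sum_zero (p : ℕ) [Fact p.Prime] (hp : p % 8 = 1) :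
    ∑ a : ZMod p, quadraticChar (ZMod p) a = 0 := by
  apply quadraticChar_sum_zero
  rw [ZMod.ringChar_zmod_n]; rintro rfl; omega

lemma gauss_all (p : ℕ) [Fact p.Prime] (hp : p % 8 = 1) :
    ∃ r : ℝ, 0 < r ∧ ∀ k : ℕ, ∑ a : ZMod p, (quadraticChar (ZMod p) a : ℂ)
      * ZMod.stdAddChar (a * (k : ZMod p)) = (quadraticChar (ZMod p) (k : ZMod p) : ℂ) * r := by
  have hpp : p.Prime := Fact.out
  have hp1 := hpp.one_lt
  obtain ⟨m, hm⟩ : ∃ m, p = 4 * m + 1 := ⟨p / 4, by omega⟩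
  obtain ⟨r, hr, hr'⟩ := gauss_pos p m hm (by omega) hpp _ rfl
  refine ⟨r, hr, ?_⟩
  have hchar : ringChar (ZMod p) ≠ 2 := by
    rw [ZMod.ringChar_zmod_n]; rintro rfl; omega
  have h0 := char_sum_zero p hp
  have hψ : ∑ a : ZMod p, ZMod.stdAddChar a = (0 : ℂ) := by
    apply AddChar.sum_eq_zero_of_ne_one
    intro h
    have h1 := (ZMod.isPrimitive_stdAddChar p) (a := 1) one_ne_zero
    rw [AddChar.mulShift_one] at h1
    exact h1 h
  have hsq : ∑ j : ZMod p, (ZMod.stdAddChar (j ^ 2) : ℂ)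
      = ∑ a : ZMod p, (quadraticChar (ZMod p) a : ℂ) * ZMod.stdAddChar a := by
    have h1 : ∑ j : ZMod p, (ZMod.stdAddChar (j ^ 2) : ℂ)
        = ∑ a : ZMod p, ∑ j ∈ univ.filter (fun j : ZMod p => j ^ 2 = a),
            (ZMod.stdAddChar (j ^ 2) : ℂ) :=
      (sum_fiberwise _ _ _).symm
    rw [h1, ← add_zero (∑ a : ZMod p, (quadraticChar (ZMod p) a : ℂ) * ZMod.stdAddChar a), ← hψ,
      ← sum_add_distrib]
    refine sum_congr rfl fun a _ => ?_
    rw [sum_congr rfl (g := fun _ => (ZMod.stdAddChar a : ℂ))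
      (fun j hj => by rw [(mem_filter.1 hj).2]), sum_const, nsmul_eq_mul]
    have hc := quadraticChar_card_sqrts hchar a
    have hc' : ((univ.filter (fun j : ZMod p => j ^ 2 = a)).card : ℤ)
        = quadraticChar (ZMod p) a + 1 := by
      rw [← hc]; congr 2; ext j; simp
    have hc'' : ((univ.filter (fun j : ZMod p => j ^ 2 = a)).card : ℂ)
        = (quadraticChar (ZMod p) a : ℂ) + 1 := by exact_mod_cast hc'
    rw [hc'']; ring
  have hG : ∑ a : ZMod p, (quadraticChar (ZMod p) a : ℂ) * ZMod.stdAddChar a = r := by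
    rw [← hsq, ← hr', ← Equiv.sum_comp (Equiv.subRight ((2 * m : ℕ) : ZMod p)), sum_zmod_range,
      mul_sum]
    refine sum_congr rfl fun j _ => ?_
    rw [← pow_add, ← std_pow]
    congr 1
    have : ((4 * m + 1 : ℕ) : ZMod p) = 0 := by rw [← hm]; simp
    push_cast at this ⊢
    simp only [Equiv.subRight_apply]
    linear_combination -(j : ZMod p) * this
  intro k
  by_cases hk : (k : ZMod p) = 0
  · simp only [hk, mul_zero, AddChar.map_zero_eq_one, mul_one]
    rw [← Int.cast_sum, h0]; simp
  · rw [← hG, mul_sum]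
    rw [← Equiv.sum_comp (Equiv.mulRight₀ (k : ZMod p) hk)
      (fun a => (quadraticChar (ZMod p) (k : ZMod p) : ℂ)
        * ((quadraticChar (ZMod p) a : ℂ) * ZMod.stdAddChar a))]
    refine sum_congr rfl fun a _ => ?_
    simp only [Equiv.mulRight₀_apply, map_mul]
    have := quadraticChar_sq_one hk
    have : (quadraticChar (ZMod p) (k : ZMod p) : ℂ) ^ 2 = 1 := by exact_mod_cast this
    push_cast
    linear_combination (-(quadraticChar (ZMod p) a : ℂ) * ZMod.stdAddChar (a * (k : ZMod p))) * this

lemma sin_sum (p : ℕ) [Fact p.Prime] (hp : p % 8 = 1) :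
    ∃ r : ℝ, 0 < r ∧ ∀ k : ℕ, ∑ a ∈ range p, (quadraticChar (ZMod p) (a : ZMod p) : ℝ)
      * Real.sin (2 * Real.pi * (1 / 8 - a / p) * k)
      = r * ((quadraticChar (ZMod p) (k : ZMod p) : ℝ) * Real.sin (2 * Real.pi * (1 / 8) * k)) := by
  obtain ⟨r, hr, h⟩ := gauss_all p hp
  refine ⟨r, hr, fun k => ?_⟩
  have hk := h k
  rw [sum_zmod_range] at hk
  have e : ∀ a : ℕ, (ZMod.stdAddChar ((a : ZMod p) * (k : ZMod p)) : ℂ)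
      = Complex.exp (((2 * Real.pi * (a / p) * k : ℝ) : ℂ) * Complex.I) := by
    intro a
    rw [← Nat.cast_mul, std_pow, ← Complex.exp_nat_mul]
    congr 1; push_cast; ring
  simp only [e] at hk
  have hre := congrArg Complex.re hk
  have him := congrArg Complex.im hk
  have c1 : ∀ (n : ℤ) (w : ℂ), ((n : ℂ) * w).re = n * w.re := by intro n w; simp
  have c2 : ∀ (n : ℤ) (w : ℂ), ((n : ℂ) * w).im = n * w.im := by intro n w; simp
  rw [Complex.re_sum] at hre
  rw [Complex.im_sum] at him
  simp only [c1, c2, Complex.exp_ofReal_mul_I_re, Complex.exp_ofReal_mul_I_im, Complex.ofReal_re,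
    Complex.ofReal_im, mul_zero] at hre him
  have : ∀ a : ℕ, Real.sin (2 * Real.pi * (1 / 8 - a / p) * k)
      = Real.sin (2 * Real.pi * (1 / 8) * k) * Real.cos (2 * Real.pi * (a / p) * k)
        - Real.cos (2 * Real.pi * (1 / 8) * k) * Real.sin (2 * Real.pi * (a / p) * k) := by
    intro a; rw [← Real.sin_sub]; congr 1; ring
  calc _ = Real.sin (2 * Real.pi * (1 / 8) * k) * (∑ a ∈ range p,
          (quadraticChar (ZMod p) (a : ZMod p) : ℝ) * Real.cos (2 * Real.pi * (a / p) * k))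
        - Real.cos (2 * Real.pi * (1 / 8) * k) * (∑ a ∈ range p,
          (quadraticChar (ZMod p) (a : ZMod p) : ℝ) * Real.sin (2 * Real.pi * (a / p) * k)) := by
        rw [mul_sum, mul_sum, ← sum_sub_distrib]
        refine sum_congr rfl fun a _ => ?_
        rw [this]; ring
    _ = _ := by rw [hre, him]; ring

lemma lam_sum_nonneg (p : ℕ) [Fact p.Prime] (hp : p % 8 = 1) (t : ℝ) (ht : 0 < t) :
    0 ≤ ∑ a ∈ range p, (quadraticChar (ZMod p) (a : ZMod p) : ℝ) * Lam (1 / 8 - a / p) t := by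
  obtain ⟨r, hr, h⟩ := sin_sum p hp
  have hq0 := Real.exp_pos (-t)
  have hq : Real.exp (-t) < 1 := Real.exp_lt_one_iff.2 (by linarith)
  have e : ∑ a ∈ range p, (quadraticChar (ZMod p) (a : ZMod p) : ℝ) * Lam (1 / 8 - a / p) t
      = ∑' y : ℕ+ × ℕ+, (r * ((quadraticChar (ZMod p) ((y.2 : ℕ) : ZMod p) : ℝ)
        * Real.sin (2 * Real.pi * (1 / 8) * (y.2 : ℕ)))) * Real.exp (-t) ^ (y.1 * y.2 : ℕ) := by
    simp only [Lam, ← tsum_mul_left]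
    rw [← Summable.tsum_finsetSum]
    · refine tsum_congr fun y => ?_
      rw [← h, sum_mul]
      exact sum_congr rfl fun a _ => by ring
    · intro a _
      apply Summable.mul_left
      exact lam_summable (fun k => Real.sin (2 * Real.pi * (1 / 8 - a / p) * k)) 1
        (fun n => Real.abs_sin_le_one _) _ hq0 hq
  rw [e]
  apply lam_nonneg (fun k => r * ((quadraticChar (ZMod p) (k : ZMod p) : ℝ)
        * Real.sin (2 * Real.pi * (1 / 8) * k))) r _ _ hq0 hq
  · intro n
    rw [← mul_sum]
    exact mul_nonneg hr.le (divsum_sin p hp n)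
  · intro n
    rw [abs_mul, abs_mul, abs_of_pos hr]
    have h1 : |((quadraticChar (ZMod p) (n : ZMod p) : ℤ) : ℝ)| ≤ 1 := by
      rcases quadraticChar_isQuadratic (ZMod p) (n : ZMod p) with h | h | h <;> rw [h] <;> simp
    have h2 := Real.abs_sin_le_one (2 * Real.pi * (1 / 8) * n)
    have := mul_le_one₀ h1 (abs_nonneg _) h2
    nlinarith

lemma weighted_zero (p : ℕ) [Fact p.Prime] (hp : p % 8 = 1) :
    ∑ a ∈ range p, (quadraticChar (ZMod p) (a : ZMod p) : ℝ) * a = 0 := by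
  have hpp : p.Prime := Fact.out
  have hneg : quadraticChar (ZMod p) (-1) = 1 := by
    have := legendreSym.at_neg_one (p := p) (by rintro rfl; omega)
    rw [ZMod.χ₄_nat_one_mod_four (by omega)] at this
    simpa [legendreSym] using this
  have h0 := char_sum_zero p hp
  rw [sum_zmod_range] at h0
  have h0' : ∑ a ∈ range p, (quadraticChar (ZMod p) (a : ZMod p) : ℝ) = 0 := by exact_mod_cast h0
  obtain ⟨n, hn⟩ : ∃ n, p = n + 1 := ⟨p - 1, by have := hpp.pos; omega⟩
  set f : ℕ → ℝ := fun a => (quadraticChar (ZMod p) (a : ZMod p) : ℝ) with hf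
  have f0 : f 0 = 0 := by simp [hf]
  change ∑ a ∈ range p, f a * a = 0
  change ∑ a ∈ range p, f a = 0 at h0'
  have e1 : ∑ a ∈ range p, f a = ∑ a ∈ range n, f (a + 1) := by
    conv_lhs => rw [hn]
    rw [sum_range_succ', f0, add_zero]
  have e2 : ∑ a ∈ range p, f a * a = ∑ a ∈ range n, f (a + 1) * (a + 1) := by
    conv_lhs => rw [hn]
    rw [sum_range_succ', f0]; simp
  have refl : ∀ a, a < n → f (n - 1 - a + 1) = f (a + 1) := by
    intro a ha
    simp only [hf]
    have : ((n - 1 - a + 1 : ℕ) : ZMod p) = (-1) * ((a + 1 : ℕ) : ZMod p) := by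
      have h1 : ((n - 1 - a + 1 + (a + 1) : ℕ) : ZMod p) = 0 := by
        have : n - 1 - a + 1 + (a + 1) = p := by omega
        rw [this]; simp
      rw [Nat.cast_add] at h1
      linear_combination h1
    rw [this, map_mul, hneg, one_mul]
  have e3 : ∑ a ∈ range n, f (a + 1) * (a + 1) = ∑ a ∈ range n, f (a + 1) * (p - (a + 1)) := by
    rw [← sum_range_reflect]
    refine sum_congr rfl fun a ha => ?_
    have ha := mem_range.1 ha
    rw [refl a ha]
    congr 1
    have : n - 1 - a + 1 + (a + 1) = p := by omega
    have : ((n - 1 - a : ℕ) : ℝ) + 1 + (a + 1) = p := by exact_mod_cast this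
    linarith
  have e4 : ∑ a ∈ range n, f (a + 1) * (p - (a + 1))
      = p * ∑ a ∈ range n, f (a + 1) - ∑ a ∈ range n, f (a + 1) * (a + 1) := by
    rw [mul_sum, ← sum_sub_distrib]; exact sum_congr rfl fun a _ => by ring
  rw [e2]
  rw [← e1, h0'] at e4
  linarith

/-- For every prime `p ≡ 1 (mod 8)`, the sum `∑_{n=1}^{⌊p/8⌋} (n/p)` of
Legendre symbols is nonnegative. -/
theorem stmt_12 (p : ℕ) [Fact p.Prime] (hp : p % 8 = 1) :
    0 ≤ ∑ n ∈ Finset.Icc 1 (p / 8), legendreSym p (n : ℤ) := by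
  have hpp : p.Prime := Fact.out
  have hp0 : (0 : ℝ) < p := by exact_mod_cast hpp.pos
  set n := p / 8 with hn
  have hpn : p = 8 * n + 1 := by omega
  have hpn' : (p : ℝ) = 8 * n + 1 := by exact_mod_cast hpn
  have h0 := char_sum_zero p hp
  rw [sum_zmod_range] at h0
  have h0' : ∑ a ∈ range p, (quadraticChar (ZMod p) (a : ZMod p) : ℝ) = 0 := by exact_mod_cast h0
  have hw := weighted_zero p hp
  have hlim : ∀ a ∈ range p, Tendsto (fun t => (quadraticChar (ZMod p) (a : ZMod p) : ℝ)
      * (t * Lam (1 / 8 - a / p) t)) (𝓝[>] 0) (𝓝 ((quadraticChar (ZMod p) (a : ZMod p) : ℝ)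
      * (Real.pi * (-5 / 8 + a / p + if a ≤ n then 1 else 0)))) := by
    intro a ha
    apply Tendsto.const_mul
    have hap : (a : ℝ) + 1 ≤ p := by exact_mod_cast mem_range.1 ha
    have ha0 : (0 : ℝ) ≤ a := by positivity
    split_ifs with han
    · have han' : (a : ℝ) ≤ n := by exact_mod_cast han
      have h1 : (a : ℝ) / p < 1 / 8 := by rw [div_lt_iff₀ hp0]; linarith
      have h2 : 0 ≤ (a : ℝ) / p := by positivity
      convert Lam_tendsto (1 / 8 - a / p) (by linarith) (by linarith) using 2
      ring
    · have han' : (n : ℝ) + 1 ≤ a := by exact_mod_cast not_le.1 han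
      have h1 : 1 / 8 < (a : ℝ) / p := by rw [lt_div_iff₀ hp0]; linarith
      have h2 : (a : ℝ) / p < 1 := by rw [div_lt_iff₀ hp0]; linarith
      convert Lam_tendsto (1 / 8 - a / p + 1) (by linarith) (by linarith) using 2 with t
      · rw [Lam_add_one]
      · ring
  have hlim' := tendsto_finsetSum _ hlim
  have hnn := ge_of_tendsto hlim' (b := 0) (by
    filter_upwards [self_mem_nhdsWithin] with t ht
    have := mul_nonneg (le_of_lt ht) (lam_sum_nonneg p hp t ht)
    rw [mul_sum] at this
    refine this.trans_eq (sum_congr rfl fun a _ => by ring))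
  have e : ∑ a ∈ range p, ((quadraticChar (ZMod p) (a : ZMod p) : ℝ)
      * (Real.pi * (-5 / 8 + a / p + if a ≤ n then 1 else 0)))
      = Real.pi * (-5 / 8) * ∑ a ∈ range p, (quadraticChar (ZMod p) (a : ZMod p) : ℝ)
        + Real.pi / p * ∑ a ∈ range p, (quadraticChar (ZMod p) (a : ZMod p) : ℝ) * a
        + Real.pi * ∑ a ∈ range p, (if a ≤ n then (quadraticChar (ZMod p) (a : ZMod p) : ℝ)
          else 0) := by
    rw [mul_sum, mul_sum, mul_sum, ← sum_add_distrib, ← sum_add_distrib]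
    refine sum_congr rfl fun a _ => ?_
    split_ifs <;> ring
  rw [e, h0', hw, mul_zero, mul_zero, zero_add, zero_add] at hnn
  have hS := nonneg_of_mul_nonneg_right hnn Real.pi_pos
  have e5 : ∑ a ∈ range p, (if a ≤ n then (quadraticChar (ZMod p) (a : ZMod p) : ℝ) else 0)
      = ((∑ k ∈ Finset.Icc 1 n, legendreSym p (k : ℤ) : ℤ) : ℝ) := by
    rw [← sum_filter, Int.cast_sum]
    symm
    apply sum_subset_zero_on_sdiff
    · refine fun a ha => mem_filter.2 ?_
      rw [mem_Icc] at ha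
      rw [mem_range]
      omega
    · intro a ha
      simp only [Finset.mem_sdiff, mem_Icc, mem_filter, mem_range] at ha
      have : a = 0 := by omega
      simp [this]
    · intro a _
      simp [legendreSym]
  rw [e5] at hS
  exact_mod_cast hS
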